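/- Let K = ℚ(√d₁, √d₂) be a biquadratic field with d₁, d₂ positive odd squarefree integers. If the ring of integers O_K possesses a Euclidean ideal in the sense of Lenstra, then ω(|Δ_K|) ≤ 4, where Δ_K is the discriminant of K and ω(m) denotes the number of distinct prime divisors of m. -/

import Mathlib

open IntermediateField NumberField
noncomputable section
def biquad (d₁ d₂ : ℤ) : IntermediateField ℚ ℂ :=
  IntermediateField.adjoin ℚ {x : ℂ | x ^ 2 = (d₁ : ℂ) ∨ x ^ 2 = (d₂ : ℂ)}

/-- Lenstra's notion of a Euclidean ideal of a Dedekind domain `R`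
(with fraction field `F`). -/
def IsEuclideanIdeal (R : Type*) [CommRing R] [IsDomain R] [IsDedekindDomain R]
    (F : Type*) [Field F] [Algebra R F] [IsFractionRing R F] (C : Ideal R) : Prop :=
  C ≠ 0 ∧
  ∃ (W : Type) (rel : W → W → Prop) (_ : IsWellOrder W rel) (Ψ : Ideal R → W),
    ∀ I : Ideal R, I ≠ 0 →
      ∀ x : F,
        x ∈ (I : FractionalIdeal (nonZeroDivisors R) F)⁻¹ *
            (C : FractionalIdeal (nonZeroDivisors R) F) →
        x ∉ (C : FractionalIdeal (nonZeroDivisors R) F) →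
        ∃ y ∈ C, ∃ J : Ideal R,
          (J : FractionalIdeal (nonZeroDivisors R) F) =
            FractionalIdeal.spanSingleton (nonZeroDivisors R) (x - algebraMap R F y) *
              (I : FractionalIdeal (nonZeroDivisors R) F) *
              (C : FractionalIdeal (nonZeroDivisors R) F)⁻¹ ∧
          rel (Ψ J) (Ψ I)

/-! The theorem is an instance of genus theory. Let `K` be generated by square roots of odd
squarefree integers `dᵢ`, with `i` in a finite set `ι`, and for a prime `p` let `p*` be the one of
`±p` that is `1` modulo `4`, or `-1` if `p = 2`. Every prime dividing the discriminant of `K`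
ramifies in some `ℚ(√dᵢ)`; let `S` be the set of primes ramified in some `ℚ(√dᵢ)`. By Dirichlet's
theorem the values `(p*/l)`, `p ∈ S`, can be prescribed for a prime `l`, and `(dᵢ/l)` is their
product over the `p` ramified in `ℚ(√dᵢ)`. Hence at least `2 ^ (#S - #ι)` families of signs come
from primes `l` that split completely in `K` and so are norms of ideals.

If two of these ideals agree in `Cl / Cl²`, the product of their norms is `±1` times a norm from
`K`, up to rational squares. When the sign is `+`, it is represented by every form `x² - dᵢy²`,
which forces equal values of all the `(p*/·)`. Thus `2 ^ #S ≤ 2 ^ (#ι + 1) * [Cl : Cl²]`. Finally, a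
Euclidean ideal generates the class group, so that `[Cl : Cl²] ≤ 2`. -/

section SquareRoots

variable {F L : Type*} [Field F] [Field L] [Algebra F L]

theorem algEquiv_eq_one_of_adjoin_eq_top {S : Set L} (hS : adjoin F S = ⊤) {σ : Gal(L/F)}
    (hσ : ∀ x ∈ S, σ x = x) : σ = 1 := by
  have hfix : adjoin F S ≤ fixedField (Subgroup.zpowers σ) := by
    rw [adjoin_le_iff]
    intro x hx
    rw [SetLike.mem_coe, mem_fixedField_iff]
    have hstab : Subgroup.zpowers σ ≤ MulAction.stabilizer Gal(L/F) x :=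
      Subgroup.zpowers_le.2 (hσ x hx)
    exact fun τ hτ ↦ hstab hτ
  ext x
  exact (mem_fixedField_iff _ x).1 (hfix (hS ▸ mem_top)) σ (Subgroup.mem_zpowers σ)

theorem isIntegral_of_sq_eq_algebraMap {d : F} {s : L} (hs : s ^ 2 = algebraMap F L d) :
    IsIntegral F s :=
  .of_pow two_pos (hs ▸ isIntegral_algebraMap)

theorem splits_minpoly_of_sq_eq_algebraMap {d : F} {s : L} (hs : s ^ 2 = algebraMap F L d) :
    ((minpoly F s).map (algebraMap F L)).Splits := by
  have hfactor : (Polynomial.X ^ 2 - Polynomial.C d).map (algebraMap F L) =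
      (Polynomial.X - Polynomial.C s) * (Polynomial.X + Polynomial.C s) := by
    simp only [Polynomial.map_sub, Polynomial.map_pow, Polynomial.map_X, Polynomial.map_C, ← hs,
      Polynomial.C_pow]
    ring
  have hne : (Polynomial.X ^ 2 - Polynomial.C d).map (algebraMap F L) ≠ 0 :=
    Polynomial.map_ne_zero (Polynomial.X_pow_sub_C_ne_zero two_pos d)
  refine .of_dvd ?_ hne (Polynomial.map_dvd _ (minpoly.dvd _ _ (by simp [hs])))
  rw [hfactor]
  exact (Polynomial.Splits.X_sub_C s).mul (Polynomial.Splits.X_add_C s)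

theorem isGalois_of_adjoin_sqrt_eq_top [CharZero F] {ι : Type*} {d : ι → F} {s : ι → L}
    (hs : ∀ i, s i ^ 2 = algebraMap F L (d i)) (hgen : adjoin F (Set.range s) = ⊤) :
    IsGalois F L := by
  have hint (i) : IsIntegral F (s i) := isIntegral_of_sq_eq_algebraMap (hs i)
  have halg : Algebra.IsAlgebraic F (adjoin F (Set.range s)) :=
    isAlgebraic_adjoin (Set.forall_mem_range.2 hint)
  rw [hgen] at halg
  have : Algebra.IsAlgebraic F L := topEquiv.isAlgebraic
  have hnormal : Normal F L := normal_iff.2 fun x ↦ ⟨Algebra.IsIntegral.isIntegral x,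
    splits_of_mem_adjoin F L
      (Set.forall_mem_range.2 fun i ↦ ⟨hint i, splits_minpoly_of_sq_eq_algebraMap (hs i)⟩)
      (hgen ▸ mem_top)⟩
  exact ⟨⟩

end SquareRoots

section Ramification

variable {K : Type*} [Field K] [NumberField K]

theorem exists_mem_inertia_ne_one_of_dvd_discr [IsGalois ℚ K] {p : ℕ} (hp : p.Prime)
    (hdvd : (p : ℤ) ∣ discr K) :
    ∃ P : Ideal (𝓞 K), P.IsPrime ∧ (p : 𝓞 K) ∈ P ∧ ∃ σ ∈ P.inertia Gal(K/ℚ), σ ≠ 1 := by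
  by_contra! hinertia
  refine (not_dvd_discr_iff_forall_mem K (𝓞 K) (Nat.prime_iff_prime_int.mp hp)).2
    (fun P hP hpP ↦ ?_) hdvd
  rw [← Ideal.ramificationIdx_eq_one_iff,
    ← Ideal.ramificationIdxIn_eq_ramificationIdx (P.under ℤ) P Gal(K/ℚ),
    ← Ideal.card_inertia_eq_ramificationIdxIn (G := Gal(K/ℚ)) (P.under ℤ) P,
    Subgroup.card_eq_one, Subgroup.eq_bot_iff_forall]
  exact hinertia P hP (by simpa using hpP)

theorem natCast_dvd_of_mem_of_mem {R : Type*} [CommRing R] {P : Ideal R} (hP : P ≠ ⊤) {p : ℕ}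
    (hp : p.Prime) (hpP : (p : R) ∈ P) {n : ℤ} (hn : (n : R) ∈ P) : (p : ℤ) ∣ n := by
  by_contra hdvd
  obtain ⟨a, b, hab⟩ := (Nat.prime_iff_prime_int.1 hp).coprime_iff_not_dvd.2 hdvd
  refine hP ((Ideal.eq_top_iff_one P).2 ?_)
  have hone : (a * p + b * n : R) = 1 := by exact_mod_cast congrArg (Int.cast : ℤ → R) hab
  exact hone ▸ add_mem (P.mul_mem_left _ hpP) (P.mul_mem_left _ hn)

/-- The discriminant of `ℚ(√d)`, for a squarefree integer `d`. -/
def quadDisc (d : ℤ) : ℤ := if d % 4 = 1 then d else 4 * d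

theorem exists_two_mul_eq_one_add {d : ℤ} (hd : d % 4 = 1) {s : 𝓞 K} (hs : s ^ 2 = d) :
    ∃ θ : 𝓞 K, 2 * θ = 1 + s := by
  obtain ⟨k, rfl⟩ : ∃ k, d = 4 * k + 1 := ⟨d / 4, by omega⟩
  have hsK : (s : K) ^ 2 = 4 * k + 1 := by
    have := congrArg (algebraMap (𝓞 K) K) hs
    push_cast at this
    exact this
  have hint : IsIntegral ℤ ((1 + s : K) / 2) := by
    refine ⟨.X ^ 2 - .X - .C k, by monicity!, ?_⟩
    rw [Polynomial.eval₂_sub, Polynomial.eval₂_sub, Polynomial.eval₂_X_pow, Polynomial.eval₂_X,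
      Polynomial.eval₂_C, eq_intCast]
    linear_combination hsK / 4
  refine ⟨⟨_, hint⟩, RingOfIntegers.ext ?_⟩
  change (2 : K) * ((1 + s) / 2) = 1 + s
  exact mul_div_cancel₀ _ two_ne_zero

theorem exists_conj_sub_sq_eq_quadDisc {d : ℤ} {s : 𝓞 K} (hs : s ^ 2 = d) :
    ∃ θ : 𝓞 K, ∀ σ : Gal(K/ℚ), σ • s = -s → (σ • θ - θ) ^ 2 = quadDisc d := by
  by_cases hd : d % 4 = 1
  · obtain ⟨θ, hθ⟩ := exists_two_mul_eq_one_add hd hs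
    refine ⟨θ, fun σ hσ ↦ ?_⟩
    have hconj : 2 * (σ • θ) = 1 - s := by
      rw [two_mul, ← smul_add, ← two_mul, hθ, smul_add, smul_one, hσ, sub_eq_add_neg]
    have hdiff : σ • θ - θ = -s :=
      mul_left_cancel₀ two_ne_zero (by linear_combination hconj - hθ)
    rw [quadDisc, if_pos hd, hdiff, neg_sq, hs]
  · refine ⟨s, fun σ hσ ↦ ?_⟩
    rw [quadDisc, if_neg hd, hσ]
    push_cast
    linear_combination 4 * hs

theorem smul_eq_or_eq_neg_of_sq_eq_intCast {G R : Type*} [Group G] [CommRing R] [NoZeroDivisors R]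
    [MulSemiringAction G R] {s : R} {d : ℤ} (hs : s ^ 2 = d) (σ : G) :
    σ • s = s ∨ σ • s = -s := by
  rw [← sq_eq_sq_iff_eq_or_eq_neg, ← smul_pow', hs]
  exact map_intCast (MulSemiringAction.toRingHom G R σ) d

theorem absNorm_eq_of_forall_sub_pow_mem {l : ℕ} (hl : l.Prime) {P : Ideal (𝓞 K)} [P.IsMaximal]
    (hlP : (l : 𝓞 K) ∈ P) (hpow : ∀ x, x - x ^ l ∈ P) : P.absNorm = l := by
  have : Fact l.Prime := ⟨hl⟩
  let _ : Field (𝓞 K ⧸ P) := Ideal.Quotient.field P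
  have : CharP (𝓞 K ⧸ P) l :=
    (CharP.charP_iff_prime_eq_zero hl).2
      (by rw [← map_natCast (Ideal.Quotient.mk P), Ideal.Quotient.eq_zero_iff_mem.2 hlP])
  have hbot : (⊥ : Subfield (𝓞 K ⧸ P)) = ⊤ := by
    refine top_unique fun x _ ↦ ?_
    obtain ⟨x, rfl⟩ := Ideal.Quotient.mk_surjective x
    rw [Subfield.mem_bot_iff_pow_eq_self _ l, ← map_pow, eq_comm, Ideal.Quotient.eq]
    exact hpow x
  calc P.absNorm = Nat.card (⊤ : Subfield (𝓞 K ⧸ P)) := by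
        rw [Ideal.absNorm_apply, Submodule.cardQuot_apply]
        exact (Nat.card_congr Subfield.topEquiv.toEquiv).symm
    _ = l := by rw [← hbot, Subfield.card_bot _ l]

section

variable {ι : Type*} {d : ι → ℤ} {s : ι → 𝓞 K}

theorem isGalois_of_sqrt_generate (hs : ∀ i, s i ^ 2 = d i)
    (hgen : adjoin ℚ (Set.range fun i ↦ (s i : K)) = ⊤) : IsGalois ℚ K :=
  isGalois_of_adjoin_sqrt_eq_top (d := fun i ↦ (d i : ℚ))
    (fun i ↦ by simpa using congrArg (algebraMap (𝓞 K) K) (hs i)) hgen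

theorem eq_one_of_forall_smul_eq (hgen : adjoin ℚ (Set.range fun i ↦ (s i : K)) = ⊤)
    {σ : Gal(K/ℚ)} (hσ : ∀ i, σ • s i = s i) : σ = 1 := by
  refine algEquiv_eq_one_of_adjoin_eq_top hgen ?_
  rintro _ ⟨i, rfl⟩
  exact congrArg (algebraMap (𝓞 K) K) (hσ i)

theorem exists_dvd_quadDisc_of_dvd_discr (hs : ∀ i, s i ^ 2 = d i)
    (hgen : adjoin ℚ (Set.range fun i ↦ (s i : K)) = ⊤) {p : ℕ} (hp : p.Prime)
    (hdvd : (p : ℤ) ∣ discr K) : ∃ i, (p : ℤ) ∣ quadDisc (d i) := by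
  have := isGalois_of_sqrt_generate hs hgen
  obtain ⟨P, hP, hpP, σ, hσ, hσ1⟩ := exists_mem_inertia_ne_one_of_dvd_discr hp hdvd
  obtain ⟨i, hi⟩ : ∃ i, σ • s i ≠ s i := by
    contrapose! hσ1
    exact eq_one_of_forall_smul_eq hgen hσ1
  have hneg := (smul_eq_or_eq_neg_of_sq_eq_intCast (hs i) σ).resolve_left hi
  obtain ⟨θ, hθ⟩ := exists_conj_sub_sq_eq_quadDisc (hs i)
  have hmem : (σ • θ - θ) ^ 2 ∈ P := P.pow_mem_of_mem (hσ θ) 2 two_pos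
  exact ⟨i, natCast_dvd_of_mem_of_mem hP.ne_top hp hpP (hθ σ hneg ▸ hmem)⟩

theorem pow_sub_self_mem_of_legendreSym_eq_one {R : Type*} [CommRing R] {P : Ideal R} {l : ℕ}
    [Fact l.Prime] (hl : l ≠ 2) (hlP : (l : R) ∈ P) {d : ℤ} {s : R} (hs : s ^ 2 = d)
    (hd : legendreSym l d = 1) : s ^ l - s ∈ P := by
  obtain ⟨c, hc⟩ : (l : ℤ) ∣ d ^ (l / 2) - 1 := by
    rw [← ZMod.intCast_zmod_eq_zero_iff_dvd]
    push_cast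
    rw [← legendreSym.eq_pow, hd, Int.cast_one, sub_self]
  have hc' : (d ^ (l / 2) - 1 : R) = l * c := by exact_mod_cast congrArg Int.cast hc
  have hodd : l = 2 * (l / 2) + 1 := by have := (Fact.out : l.Prime).eq_two_or_odd; omega
  have hfactor : s ^ l - s = s * c * l := calc
    s ^ l - s = s * ((s ^ 2) ^ (l / 2) - 1) := by
      conv_lhs => rw [hodd]
      ring
    _ = s * c * l := by rw [hs, hc']; ring
  exact hfactor ▸ P.mul_mem_left _ hlP

theorem smul_eq_self_of_smul_sub_pow_mem {l : ℕ} [Fact l.Prime] (hl : l ≠ 2) {P : Ideal (𝓞 K)}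
    [hP : P.IsPrime] (hlP : (l : 𝓞 K) ∈ P) {σ : Gal(K/ℚ)} (hσ : ∀ x : 𝓞 K, σ • x - x ^ l ∈ P)
    {d : ℤ} {s : 𝓞 K} (hs : s ^ 2 = d) (hd : legendreSym l d = 1) : σ • s = s := by
  by_contra hne
  have hneg := (smul_eq_or_eq_neg_of_sq_eq_intCast hs σ).resolve_left hne
  have hmem : ((4 * d : ℤ) : 𝓞 K) ∈ P := by
    have : (-2 * s) ^ 2 ∈ P := by
      refine P.pow_mem_of_mem ?_ 2 two_pos
      have := add_mem (hσ s) (pow_sub_self_mem_of_legendreSym_eq_one hl hlP hs hd)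
      rw [hneg] at this
      convert this using 1
      ring
    convert this using 1
    push_cast
    linear_combination -4 * hs
  have hl' := Nat.prime_iff_prime_int.1 (Fact.out : l.Prime)
  rcases hl'.dvd_or_dvd (natCast_dvd_of_mem_of_mem hP.ne_top Fact.out hlP hmem) with h | h
  · have h2 : l ∣ 2 ^ 2 := by exact_mod_cast h
    exact hl ((Nat.prime_dvd_prime_iff_eq Fact.out Nat.prime_two).1
      ((Fact.out : l.Prime).dvd_of_dvd_pow h2))
  · rw [(legendreSym.eq_zero_iff l d).2 ((ZMod.intCast_zmod_eq_zero_iff_dvd d l).2 h)] at hd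
    exact zero_ne_one hd

theorem exists_ideal_absNorm_eq (hs : ∀ i, s i ^ 2 = d i)
    (hgen : adjoin ℚ (Set.range fun i ↦ (s i : K)) = ⊤) {l : ℕ} [Fact l.Prime] (hl : l ≠ 2)
    (hd : ∀ i, legendreSym l (d i) = 1) : ∃ P : Ideal (𝓞 K), P.absNorm = l := by
  have := isGalois_of_sqrt_generate hs hgen
  have hl' := Nat.prime_iff_prime_int.1 (Fact.out : l.Prime)
  have : (Ideal.span {(l : ℤ)}).IsMaximal :=
    PrincipalIdealRing.isMaximal_of_irreducible hl'.irreducible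
  obtain ⟨P, hPmax, hP⟩ :=
    Ideal.exists_maximal_ideal_liesOver_of_isIntegral (S := 𝓞 K) (Ideal.span {(l : ℤ)})
  have hlP : (l : 𝓞 K) ∈ P := by
    have := (Ideal.liesOver_span_iff hPmax.ne_top hl').1 hP
    simpa using this
  have hP0 : P ≠ ⊥ := by
    rintro rfl
    exact (Fact.out : l.Prime).ne_zero (by simpa using hlP)
  have : Finite (𝓞 K ⧸ P) := Ideal.finiteQuotientOfFreeOfNeBot P hP0
  obtain ⟨σ, hσ⟩ := IsArithFrobAt.exists_of_isInvariant ℤ Gal(K/ℚ) P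
  have hcard : Nat.card (ℤ ⧸ P.under ℤ) = l := by
    rw [← hP.over, Nat.card_congr (Int.quotientSpanNatEquivZMod l).toEquiv, Nat.card_zmod]
  have hfrob (x : 𝓞 K) : σ • x - x ^ l ∈ P := hcard ▸ hσ x
  have hσ1 : σ = 1 := eq_one_of_forall_smul_eq hgen
    fun i ↦ smul_eq_self_of_smul_sub_pow_mem hl hlP hfrob (hs i) (hd i)
  refine ⟨P, absNorm_eq_of_forall_sub_pow_mem Fact.out hlP fun x ↦ ?_⟩
  simpa only [hσ1, one_smul] using hfrob x

end

end Ramification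

section GenusCharacters

open scoped NumberTheorySymbols

/-- For an odd prime `p`, the integer `p* = ±p` with `p* % 4 = 1`, for which `ℚ(√p*)` is ramified
only at `p`; for `p = 2`, the integer `-1`, since radicands divisible by `2` do not occur here. The
genus character at `p` sends an odd `n` to `J(primeRadicand p | n)`. -/
def primeRadicand (p : ℕ) : ℤ := if p = 2 then -1 else ZMod.χ₄ p * p

theorem jacobiSym_primeRadicand_two {n : ℕ} (hn : Odd n) :
    J(primeRadicand 2 | n) = ZMod.χ₄ n := by
  rw [primeRadicand, if_pos rfl, jacobiSym.at_neg_one hn]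

theorem jacobiSym_primeRadicand {p : ℕ} (hp : p.Prime) (hp2 : p ≠ 2) {n : ℕ} (hn : Odd n) :
    J(primeRadicand p | n) = J(n | p) := by
  have hpodd : Odd p := hp.odd_of_ne_two hp2
  rw [primeRadicand, if_neg hp2, jacobiSym.mul_left, jacobiSym.quadratic_reciprocity' hpodd hn,
    ← mul_assoc, qrSign.symm hn hpodd]
  change qrSign p n * qrSign p n * _ = _
  rw [← sq, qrSign.sq_eq_one hpodd hn, one_mul]

theorem jacobiSym_prod_left {α : Type*} (S : Finset α) (f : α → ℤ) (n : ℕ) :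
    J(∏ i ∈ S, f i | n) = ∏ i ∈ S, J(f i | n) :=
  map_prod (⟨⟨(J(· | n)), jacobiSym.one_left n⟩, fun a b ↦ jacobiSym.mul_left a b n⟩ : ℤ →* ℤ) f S

theorem χ₄_mul_self_eq {n : ℕ} (hn : Odd n) {d : ℤ} (hd : d.natAbs = n) :
    ZMod.χ₄ n * n = if d % 4 = 1 then d else -d := by
  have := Nat.odd_iff.1 hn
  rw [ZMod.χ₄_nat_eq_if_mod_four]
  split_ifs <;> omega

theorem prod_primeFactors_primeRadicand {m : ℕ} (hodd : Odd m) (hsf : Squarefree m) :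
    ∏ p ∈ m.primeFactors, primeRadicand p = ZMod.χ₄ m * m := by
  have hne (p) (hp : p ∈ m.primeFactors) : p ≠ 2 := by
    rintro rfl
    exact Nat.not_even_iff_odd.2 hodd (even_iff_two_dvd.2 (Nat.dvd_of_mem_primeFactors hp))
  calc ∏ p ∈ m.primeFactors, primeRadicand p
      = ∏ p ∈ m.primeFactors, (ZMod.χ₄ p * p) :=
        Finset.prod_congr rfl fun p hp ↦ if_neg (hne p hp)
    _ = ZMod.χ₄ ((∏ p ∈ m.primeFactors, p : ℕ) : ZMod 4) * (∏ p ∈ m.primeFactors, p : ℕ) := by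
        rw [Finset.prod_mul_distrib, Nat.cast_prod, map_prod, Nat.cast_prod]
    _ = ZMod.χ₄ m * m := by rw [Nat.prod_primeFactors_of_squarefree hsf]

theorem prod_primeFactors_quadDisc_primeRadicand {d : ℤ} (hodd : Odd d) (hsf : Squarefree d) :
    ∏ p ∈ (quadDisc d).natAbs.primeFactors, primeRadicand p = d := by
  have hodd' : Odd d.natAbs := Int.natAbs_odd.2 hodd
  have hprod := (prod_primeFactors_primeRadicand hodd' (Int.squarefree_natAbs.2 hsf)).trans
    (χ₄_mul_self_eq hodd' rfl)
  by_cases hd : d % 4 = 1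
  · rw [quadDisc, if_pos hd, hprod, if_pos hd]
  · have hfactors : (4 * d).natAbs.primeFactors = insert 2 d.natAbs.primeFactors := by
      rw [Int.natAbs_mul, Nat.primeFactors_mul (by norm_num) (Int.natAbs_ne_zero.2 hsf.ne_zero),
        show Int.natAbs 4 = 2 ^ 2 from rfl, Nat.primeFactors_prime_pow two_ne_zero Nat.prime_two,
        Finset.singleton_union]
    have htwo : 2 ∉ d.natAbs.primeFactors := fun h ↦
      Nat.not_even_iff_odd.2 hodd' (even_iff_two_dvd.2 (Nat.dvd_of_mem_primeFactors h))
    rw [quadDisc, if_neg hd, hfactors, Finset.prod_insert htwo, hprod, if_neg hd, primeRadicand,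
      if_pos rfl, neg_one_mul, neg_neg]

theorem jacobiSym_eq_prod_primeRadicand {d : ℤ} (hodd : Odd d) (hsf : Squarefree d) (n : ℕ) :
    J(d | n) = ∏ p ∈ (quadDisc d).natAbs.primeFactors, J(primeRadicand p | n) := by
  rw [← jacobiSym_prod_left, prod_primeFactors_quadDisc_primeRadicand hodd hsf]

theorem exists_primitive_num_den (x y : ℚ) :
    ∃ a b c : ℤ, x * c = a ∧ y * c = b ∧ ∀ p : ℤ, Prime p → p ∣ a → p ∣ b → ¬ p ∣ c := by
  obtain ⟨g, hg, hgcd⟩ := Finset.extract_gcd (s := Finset.univ)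
    ![x.num * y.den, y.num * x.den, x.den * y.den] Finset.univ_nonempty
  set D := Finset.univ.gcd ![x.num * y.den, y.num * x.den, (x.den * y.den : ℤ)]
  have h0 : (x.num * y.den : ℚ) = D * g 0 := by exact_mod_cast hg 0 (Finset.mem_univ _)
  have h1 : (y.num * x.den : ℚ) = D * g 1 := by exact_mod_cast hg 1 (Finset.mem_univ _)
  have h2 : (x.den * y.den : ℚ) = D * g 2 := by exact_mod_cast hg 2 (Finset.mem_univ _)
  have hD : (D : ℚ) ≠ 0 := left_ne_zero_of_mul (b := (g 2 : ℚ)) (h2 ▸ by positivity)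
  refine ⟨g 0, g 1, g 2, mul_left_cancel₀ hD ?_, mul_left_cancel₀ hD ?_, fun p hp ha hb hc ↦ ?_⟩
  · linear_combination -x * h2 + h0 + y.den * x.mul_den_eq_num
  · linear_combination -y * h2 + h1 + x.den * y.mul_den_eq_num
  · refine hp.not_dvd_one (hgcd ▸ Finset.dvd_gcd fun i _ ↦ ?_)
    fin_cases i <;> assumption

theorem exists_primitive_of_eq_sq_sub_mul_sq {d n : ℤ} {x y : ℚ}
    (h : (n : ℚ) = x ^ 2 - d * y ^ 2) :
    ∃ a b c : ℤ, n * c ^ 2 = a ^ 2 - d * b ^ 2 ∧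
      ∀ p : ℤ, Prime p → p ∣ a → p ∣ b → ¬ p ∣ c := by
  obtain ⟨a, b, c, hx, hy, hprim⟩ := exists_primitive_num_den x y
  refine ⟨a, b, c, ?_, hprim⟩
  have : (n * c ^ 2 : ℚ) = a ^ 2 - d * b ^ 2 := by rw [h, ← hx, ← hy]; ring
  exact_mod_cast this

theorem not_dvd_of_primitive_form {p d n a b c : ℤ} (hp : Prime p) (hsf : Squarefree d)
    (hpd : p ∣ d) (hform : n * c ^ 2 = a ^ 2 - d * b ^ 2) (hprim : p ∣ a → p ∣ b → ¬ p ∣ c) :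
    ¬ p ∣ c := by
  intro hpc
  have hpa : p ∣ a := by
    refine hp.dvd_of_dvd_pow (n := 2) ?_
    rw [← sub_add_cancel (a ^ 2) (d * b ^ 2), ← hform]
    exact dvd_add (dvd_mul_of_dvd_right (dvd_pow hpc two_ne_zero) _) (dvd_mul_of_dvd_left hpd _)
  have hpb : p ∣ b := by
    obtain ⟨e, rfl⟩ := hpd
    have hpe : ¬ p ∣ e := fun he ↦ hp.not_isUnit (hsf p (mul_dvd_mul_left _ he))
    have hdvd : p * p ∣ p * (e * b ^ 2) := by
      rw [← mul_assoc, ← sub_sub_cancel (a ^ 2) (p * e * b ^ 2), ← hform, sq, sq]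
      exact dvd_sub (mul_dvd_mul hpa hpa) (dvd_mul_of_dvd_right (mul_dvd_mul hpc hpc) _)
    rw [mul_dvd_mul_iff_left hp.ne_zero] at hdvd
    exact hp.dvd_of_dvd_pow ((hp.dvd_or_dvd hdvd).resolve_left hpe)
  exact hprim hpa hpb hpc

theorem isSquare_zmod_of_eq_sq_sub_mul_sq {p : ℕ} [Fact p.Prime] {d n : ℤ} (hsf : Squarefree d)
    (hpd : (p : ℤ) ∣ d) {x y : ℚ} (h : (n : ℚ) = x ^ 2 - d * y ^ 2) : IsSquare (n : ZMod p) := by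
  have hp : Prime (p : ℤ) := Nat.prime_iff_prime_int.1 Fact.out
  obtain ⟨a, b, c, hform, hprim⟩ := exists_primitive_of_eq_sq_sub_mul_sq h
  have hc : (c : ZMod p) ≠ 0 := by
    rw [Ne, ZMod.intCast_zmod_eq_zero_iff_dvd]
    exact not_dvd_of_primitive_form hp hsf hpd hform (hprim p hp)
  have hd : (d : ZMod p) = 0 := by rwa [ZMod.intCast_zmod_eq_zero_iff_dvd]
  have hmod : (n : ZMod p) * c ^ 2 = a ^ 2 - d * b ^ 2 := by
    exact_mod_cast congrArg (Int.cast : ℤ → ZMod p) hform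
  refine ⟨a / c, ?_⟩
  rw [div_mul_div_comm, eq_div_iff (mul_ne_zero hc hc), ← sq, ← sq, hmod, hd]
  ring

theorem emod_four_eq_one_of_eq_sq_sub_mul_sq {d n : ℤ} (hd : d % 4 = 3) (hn : Odd n)
    {x y : ℚ} (h : (n : ℚ) = x ^ 2 - d * y ^ 2) : n % 4 = 1 := by
  obtain ⟨a, b, c, hform, hprim⟩ := exists_primitive_of_eq_sq_sub_mul_sq h
  by_contra hn1
  have hn3 : n % 4 = 3 := by have := Int.odd_iff.1 hn; omega
  have hmod4 {k : ℤ} (hk : k % 4 = 3) : (k : ZMod 4) = 3 :=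
    (ZMod.intCast_eq_intCast_iff k 3 4).2 hk
  have hmod : (3 : ZMod 4) * c ^ 2 = a ^ 2 - 3 * b ^ 2 := by
    rw [← hmod4 hd]
    nth_rw 1 [hmod4 hd, ← hmod4 hn3]
    exact_mod_cast congrArg (Int.cast : ℤ → ZMod 4) hform
  have htwo : ∀ c a b : ZMod 4, 3 * c ^ 2 = a ^ 2 - 3 * b ^ 2 →
      2 * a = 0 ∧ 2 * b = 0 ∧ 2 * c = 0 := by decide
  have heven {k : ℤ} (hk : 2 * (k : ZMod 4) = 0) : 2 ∣ k := by
    have : (4 : ℤ) ∣ 2 * k := (ZMod.intCast_zmod_eq_zero_iff_dvd _ 4).1 (by exact_mod_cast hk)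
    omega
  obtain ⟨ha, hb, hc⟩ := htwo _ _ _ hmod
  exact hprim 2 Int.prime_two (heven ha) (heven hb) (heven hc)

theorem jacobiSym_primeRadicand_eq_one {d : ℤ} (hodd : Odd d) (hsf : Squarefree d) {p n : ℕ}
    (hp : p.Prime) (hpd : (p : ℤ) ∣ quadDisc d) (hn : Odd n) (hpn : p.Coprime n) {x y : ℚ}
    (h : (n : ℚ) = x ^ 2 - d * y ^ 2) : J(primeRadicand p | n) = 1 := by
  have hd : d % 4 = 1 ∨ d % 4 = 3 := by have := Int.odd_iff.1 hodd; omega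
  have h' : ((n : ℤ) : ℚ) = x ^ 2 - d * y ^ 2 := by exact_mod_cast h
  rcases eq_or_ne p 2 with rfl | hp2
  · have hd3 : d % 4 = 3 := by
      refine hd.resolve_left fun hd1 ↦ ?_
      rw [quadDisc, if_pos hd1] at hpd
      omega
    have := emod_four_eq_one_of_eq_sq_sub_mul_sq hd3 ((Int.odd_coe_nat n).2 hn) h'
    rw [jacobiSym_primeRadicand_two hn, ZMod.χ₄_nat_one_mod_four (by omega)]
  · have : Fact p.Prime := ⟨hp⟩
    have hpd' : (p : ℤ) ∣ d := by
      have hp4 : IsCoprime (p : ℤ) 4 :=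
        Nat.isCoprime_iff_coprime.2 (((Nat.coprime_primes hp Nat.prime_two).2 hp2).pow_right 2)
      rw [quadDisc] at hpd
      split_ifs at hpd
      · exact hpd
      · exact hp4.dvd_of_dvd_mul_left hpd
    rw [jacobiSym_primeRadicand hp hp2 hn, ← jacobiSym.legendreSym.to_jacobiSym,
      legendreSym.eq_one_iff]
    · exact isSquare_zmod_of_eq_sq_sub_mul_sq hsf hpd' h'
    · rw [Int.cast_natCast, Ne, ZMod.natCast_eq_zero_iff]
      exact (Nat.Prime.coprime_iff_not_dvd hp).1 hpn

theorem exists_prime_gt_forall_modEq {ι : Type*} [Finite ι] {a m : ι → ℕ} (hm : ∀ i, m i ≠ 0)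
    (hcop : Pairwise (Function.onFun Nat.Coprime m)) (ha : ∀ i, (a i).Coprime (m i)) (B : ℕ) :
    ∃ l > B, l.Prime ∧ ∀ i, l ≡ a i [MOD m i] := by
  have := Fintype.ofFinite ι
  obtain ⟨k, hk⟩ := Nat.chineseRemainderOfFinset a m Finset.univ (fun i _ ↦ hm i)
    (hcop.set_pairwise _)
  have : NeZero (∏ i, m i) := ⟨Finset.prod_ne_zero_iff.2 fun i _ ↦ hm i⟩
  have hunit : IsUnit (k : ZMod (∏ i, m i)) := by
    rw [ZMod.isUnit_iff_coprime]
    exact Nat.Coprime.prod_right fun i hi ↦ (hk i hi).gcd_eq.trans (ha i)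
  obtain ⟨l, hlB, hl, hlk⟩ := Nat.forall_exists_prime_gt_and_eq_mod hunit B
  refine ⟨l, hlB, hl, fun i ↦ ?_⟩
  have hlk' : l ≡ k [MOD ∏ i, m i] := (ZMod.natCast_eq_natCast_iff _ _ _).1 hlk
  have hi := Finset.mem_univ i
  exact (hlk'.of_dvd (Finset.dvd_prod_of_mem m hi)).trans (hk i hi)

-- The modulus `p ^ 2` serves both the odd primes and `p = 2`, where one needs a condition mod `4`.
theorem exists_coprime_forall_modEq_jacobiSym_primeRadicand_eq {p : ℕ} (hp : p.Prime) (ε : ℤˣ) :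
    ∃ a : ℕ, a.Coprime p ∧ ∀ n : ℕ, Odd n → n ≡ a [MOD p ^ 2] → J(primeRadicand p | n) = ε := by
  rcases eq_or_ne p 2 with rfl | hp2
  · rcases Int.units_eq_one_or ε with rfl | rfl
    · refine ⟨1, Nat.coprime_one_left 2, fun n hn hna ↦ ?_⟩
      rw [jacobiSym_primeRadicand_two hn, ZMod.χ₄_nat_one_mod_four hna, Units.val_one]
    · refine ⟨3, by norm_num, fun n hn hna ↦ ?_⟩
      rw [jacobiSym_primeRadicand_two hn, ZMod.χ₄_nat_three_mod_four hna, Units.val_neg,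
        Units.val_one]
  · have : Fact p.Prime := ⟨hp⟩
    obtain ⟨x, hx⟩ : ∃ x : ZMod p, quadraticChar (ZMod p) x = ε := by
      rcases Int.units_eq_one_or ε with rfl | rfl
      · exact ⟨1, map_one _⟩
      · exact quadraticChar_exists_neg_one (by rwa [ZMod.ringChar_zmod_n])
    have hx0 : x ≠ 0 := by
      rintro rfl
      rw [quadraticChar_zero] at hx
      exact ε.ne_zero hx.symm
    refine ⟨x.val, ZMod.val_coe_unit_coprime (Units.mk0 x hx0), fun n hn hna ↦ ?_⟩
    have hnx : (n : ZMod p) = x := by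
      rw [← ZMod.natCast_zmod_val x, ZMod.natCast_eq_natCast_iff]
      exact hna.of_dvd (dvd_pow_self p two_ne_zero)
    rw [jacobiSym_primeRadicand hp hp2 hn, ← jacobiSym.legendreSym.to_jacobiSym, legendreSym,
      Int.cast_natCast, hnx, hx]

theorem exists_prime_gt_forall_jacobiSym_primeRadicand_eq {S : Finset ℕ} (hS : ∀ p ∈ S, p.Prime)
    (w : S → ℤˣ) (B : ℕ) :
    ∃ l > B, l.Prime ∧ Odd l ∧ ∀ p : S, J(primeRadicand p | l) = w p := by
  choose a hcop ha using fun p : S ↦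
    exists_coprime_forall_modEq_jacobiSym_primeRadicand_eq (hS p p.2) (w p)
  obtain ⟨l, hlB, hl, hla⟩ := exists_prime_gt_forall_modEq (a := a) (m := fun p ↦ p ^ 2)
    (fun p ↦ pow_ne_zero 2 (hS p p.2).ne_zero)
    (fun p q hpq ↦ Nat.Coprime.pow 2 2
      ((Nat.coprime_primes (hS p p.2) (hS q q.2)).2 (Subtype.coe_injective.ne hpq)))
    (fun p ↦ (hcop p).pow_right 2) (max B 2)
  have hodd : Odd l := hl.odd_of_ne_two (by omega)
  exact ⟨l, by omega, hl, hodd, fun p ↦ ha p l hodd (hla p)⟩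

end GenusCharacters

section EuclideanIdeals

open FractionalIdeal (spanSingleton)
open scoped nonZeroDivisors

variable {R F : Type*} [CommRing R] [IsDedekindDomain R] [Field F] [Algebra R F]
  [IsFractionRing R F] {C : Ideal R}

theorem eq_top_of_inv_mul_le {I : Ideal R} (hI : I ≠ 0) (hC : C ≠ 0)
    (hle : (I : FractionalIdeal R⁰ F)⁻¹ * C ≤ C) : I = ⊤ := by
  have hI' : (I : FractionalIdeal R⁰ F) ≠ 0 := FractionalIdeal.coeIdeal_ne_zero.2 hI
  have hC' : (C : FractionalIdeal R⁰ F) ≠ 0 := FractionalIdeal.coeIdeal_ne_zero.2 hC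
  have hone : ((⊤ : Ideal R) : FractionalIdeal R⁰ F) ≤ I := by
    calc ((⊤ : Ideal R) : FractionalIdeal R⁰ F)
        = (I : FractionalIdeal R⁰ F)⁻¹ * C * ((C : FractionalIdeal R⁰ F)⁻¹ * I) := by
          rw [FractionalIdeal.coeIdeal_top]
          field_simp
      _ ≤ C * ((C : FractionalIdeal R⁰ F)⁻¹ * I) := by gcongr
      _ = I := mul_inv_cancel_left₀ hC' _
  exact top_le_iff.1 ((FractionalIdeal.coeIdeal_le_coeIdeal F).1 hone)

namespace IsEuclideanIdeal

theorem exists_eq_spanSingleton_mul_pow (hE : IsEuclideanIdeal R F C) {I : Ideal R} (hI : I ≠ 0) :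
    ∃ (k : ℕ) (α : F), α ≠ 0 ∧
      (I : FractionalIdeal R⁰ F) = spanSingleton R⁰ α * (C : FractionalIdeal R⁰ F) ^ k := by
  obtain ⟨hC, W, rel, hW, Ψ, hΨ⟩ := hE
  have hwf : WellFounded fun I J : Ideal R ↦ rel (Ψ I) (Ψ J) :=
    InvImage.wf Ψ hW.toIsWellFounded.wf
  induction I using hwf.induction with
  | _ I ih =>
  have hI' : (I : FractionalIdeal R⁰ F) ≠ 0 := FractionalIdeal.coeIdeal_ne_zero.2 hI
  have hC' : (C : FractionalIdeal R⁰ F) ≠ 0 := FractionalIdeal.coeIdeal_ne_zero.2 hC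
  by_cases hle : (I : FractionalIdeal R⁰ F)⁻¹ * C ≤ C
  · refine ⟨0, 1, one_ne_zero, ?_⟩
    rw [eq_top_of_inv_mul_le hI hC hle, FractionalIdeal.coeIdeal_top, pow_zero, mul_one,
      FractionalIdeal.spanSingleton_one]
  obtain ⟨x, hx, hxC⟩ := SetLike.not_le_iff_exists.1 hle
  obtain ⟨y, hy, J, hJ, hlt⟩ := hΨ I hI x hx hxC
  have hz : x - algebraMap R F y ≠ 0 := fun h ↦
    hxC (sub_eq_zero.1 h ▸ FractionalIdeal.mem_coeIdeal_of_mem _ hy)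
  have hz' : spanSingleton R⁰ (x - algebraMap R F y) ≠ 0 :=
    FractionalIdeal.spanSingleton_ne_zero_iff.2 hz
  have hJ0 : J ≠ 0 := by
    refine (FractionalIdeal.coeIdeal_ne_zero (K := F)).1 ?_
    rw [hJ]
    exact mul_ne_zero (mul_ne_zero hz' hI') (inv_ne_zero hC')
  obtain ⟨k, α, hα, hJα⟩ := ih J hlt hJ0
  refine ⟨k + 1, α / (x - algebraMap R F y), div_ne_zero hα hz, ?_⟩
  rw [← FractionalIdeal.spanSingleton_div_spanSingleton, pow_succ, div_mul_eq_mul_div,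
    ← mul_assoc, ← hJα, hJ]
  field_simp

theorem isCyclic_classGroup (hE : IsEuclideanIdeal R F C) : IsCyclic (ClassGroup R) := by
  let C₀ : (Ideal R)⁰ := ⟨C, mem_nonZeroDivisors_of_ne_zero hE.1⟩
  refine ⟨ClassGroup.mk0 C₀, fun c ↦ ?_⟩
  obtain ⟨I, rfl⟩ := ClassGroup.mk0_surjective c
  obtain ⟨k, α, hα, h⟩ := hE.exists_eq_spanSingleton_mul_pow (nonZeroDivisors.coe_ne_zero I)
  refine ⟨k, ?_⟩
  change ClassGroup.mk0 C₀ ^ (k : ℤ) = _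
  rw [zpow_natCast, ← map_pow, ClassGroup.mk0_eq_mk0_iff_exists_fraction_ring F]
  refine ⟨α, hα, ?_⟩
  rw [h, SubmonoidClass.coe_pow, FractionalIdeal.coeIdeal_pow]

end IsEuclideanIdeal

end EuclideanIdeals

section NormForm

variable {F L : Type*} [Field F] [Field L] [Algebra F L]

theorem norm_quadraticAlgebra_eq_sq_sub_mul_sq {d : F} (z : QuadraticAlgebra F d 0) :
    Algebra.norm F z = z.re ^ 2 - d * z.im ^ 2 := by
  rw [Algebra.norm_apply]
  refine (QuadraticAlgebra.det_toLinearMap_eq_norm z).trans ?_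
  rw [QuadraticAlgebra.norm_def]
  ring

theorem exists_norm_eq_sq_sub_mul_sq [FiniteDimensional F L] {d : F} (hd : ¬IsSquare d) {s : L}
    (hs : s ^ 2 = algebraMap F L d) (x : L) : ∃ a b : F, Algebra.norm F x = a ^ 2 - d * b ^ 2 := by
  have : Fact (∀ r : F, r ^ 2 ≠ d + 0 * r) :=
    ⟨fun r hr ↦ hd (isSquare_iff_exists_sq d |>.2 ⟨r, by rw [hr, zero_mul, add_zero]⟩)⟩
  let f : QuadraticAlgebra F d 0 →ₐ[F] L :=
    QuadraticAlgebra.lift ⟨s, by rw [← sq, hs, zero_smul, add_zero, Algebra.smul_def, mul_one]⟩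
  let _ : Algebra (QuadraticAlgebra F d 0) L := f.toAlgebra
  have : IsScalarTower F (QuadraticAlgebra F d 0) L := .of_algebraMap_eq' f.comp_algebraMap.symm
  have : Module.Finite (QuadraticAlgebra F d 0) L := .of_restrictScalars_finite F _ _
  rw [← Algebra.norm_norm (S := QuadraticAlgebra F d 0)]
  exact ⟨_, _, norm_quadraticAlgebra_eq_sq_sub_mul_sq _⟩

end NormForm

section ClassGroup

open scoped nonZeroDivisors

variable {K : Type*} [Field K] [NumberField K]

theorem exists_absNorm_eq_abs_norm_mul {I J : (Ideal (𝓞 K))⁰}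
    (h : ClassGroup.mk0 I = ClassGroup.mk0 J) :
    ∃ x : K, (J.1.absNorm : ℚ) = |Algebra.norm ℚ x| * I.1.absNorm := by
  obtain ⟨x, -, hx⟩ := (ClassGroup.mk0_eq_mk0_iff_exists_fraction_ring K).1 h
  refine ⟨x, ?_⟩
  rw [← FractionalIdeal.coeIdeal_absNorm (K := K), ← hx, map_mul,
    FractionalIdeal.absNorm_span_singleton, FractionalIdeal.coeIdeal_absNorm]

theorem exists_absNorm_eq_abs_norm_mul_sq {I J : (Ideal (𝓞 K))⁰}
    (h : (ClassGroup.mk0 I : ClassGroup (𝓞 K) ⧸ (powMonoidHom 2 : ClassGroup (𝓞 K) →* _).range) =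
      ClassGroup.mk0 J) :
    ∃ (x : K) (q : ℚ), (J.1.absNorm : ℚ) = |Algebra.norm ℚ x| * I.1.absNorm * q ^ 2 := by
  obtain ⟨c, hc⟩ := QuotientGroup.eq.1 h
  obtain ⟨A, rfl⟩ := ClassGroup.mk0_surjective c
  have hIA : ClassGroup.mk0 (I * A ^ 2) = ClassGroup.mk0 J := by
    rw [map_mul, map_pow]
    exact mul_eq_of_eq_inv_mul hc
  obtain ⟨x, hx⟩ := exists_absNorm_eq_abs_norm_mul hIA
  refine ⟨x, A.1.absNorm, ?_⟩
  rw [hx]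
  push_cast [map_mul, map_pow]
  ring

variable (K) in
theorem exists_forall_absNorm_mul_absNorm_eq :
    ∃ f : (Ideal (𝓞 K))⁰ →
        (ClassGroup (𝓞 K) ⧸ (powMonoidHom 2 : ClassGroup (𝓞 K) →* _).range) × ℤˣ,
      ∀ I J, f I = f J → ∃ (x : K) (q : ℚ),
        (I.1.absNorm * J.1.absNorm : ℚ) = Algebra.norm ℚ x * q ^ 2 := by
  have hsurj := (QuotientGroup.mk'_surjective
    (powMonoidHom 2 : ClassGroup (𝓞 K) →* _).range).comp ClassGroup.mk0_surjective
  choose rep hrep using hsurj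
  choose x q hx using fun I : (Ideal (𝓞 K))⁰ ↦
    exists_absNorm_eq_abs_norm_mul_sq (J := I) (hrep (ClassGroup.mk0 I))
  have hsign (r : ℚ) : ∃ ε : ℤˣ, |r| = (ε : ℤ) * r := by
    rcases abs_choice r with h | h
    · exact ⟨1, by simp [h]⟩
    · exact ⟨-1, by simp [h]⟩
  choose ε hε using hsign
  refine ⟨fun I ↦ (ClassGroup.mk0 I, ε (Algebra.norm ℚ (x I))), fun I J hIJ ↦ ?_⟩
  obtain ⟨hclass, hεIJ⟩ := Prod.mk.inj hIJ
  set N := Ideal.absNorm (rep (ClassGroup.mk0 J) : Ideal (𝓞 K))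
  refine ⟨x I * x J, N * q I * q J, ?_⟩
  have hone : ((ε (Algebra.norm ℚ (x J)) : ℤ) : ℚ) ^ 2 = 1 := by
    rw [← Int.cast_pow, ← Units.val_pow_eq_pow_val, Int.units_sq, Units.val_one, Int.cast_one]
  rw [hx I, hx J, hε, hε, hclass, hεIJ, map_mul]
  linear_combination Algebra.norm ℚ (x I) * Algebra.norm ℚ (x J) * N ^ 2 * q I ^ 2 * q J ^ 2 * hone

end ClassGroup

theorem natCard_le_card_ker_mul_card {G H : Type*} [Group G] [Group H] [Finite H] (f : G →* H) :
    Nat.card G ≤ Nat.card f.ker * Nat.card H := by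
  rw [← f.ker.card_mul_index, Subgroup.index_ker]
  exact Nat.mul_le_mul_left _ f.range.card_le_card_group

section Genera

open scoped nonZeroDivisors NumberTheorySymbols

variable {K : Type*} [Field K] [NumberField K]

theorem not_isSquare_of_dvd_quadDisc {p : ℕ} (hp : p.Prime) {d : ℤ} (hsf : Squarefree d)
    (hpd : (p : ℤ) ∣ quadDisc d) : ¬IsSquare (d : ℚ) := by
  rw [Rat.isSquare_intCast_iff]
  rintro ⟨a, rfl⟩
  have ha : a * a = 1 := Int.isUnit_mul_self (hsf a dvd_rfl)
  have hp1 : (p : ℤ) ∣ 1 := by simpa [ha, quadDisc] using hpd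
  exact (Nat.prime_iff_prime_int.1 hp).not_dvd_one hp1

theorem jacobiSym_primeRadicand_eq_one_of_eq_norm {d : ℤ} (hodd : Odd d) (hsf : Squarefree d)
    {s : 𝓞 K} (hs : s ^ 2 = d) {p n : ℕ} (hp : p.Prime) (hpd : (p : ℤ) ∣ quadDisc d) (hn : Odd n)
    (hpn : p.Coprime n) {x : K} {q : ℚ} (h : (n : ℚ) = Algebra.norm ℚ x * q ^ 2) :
    J(primeRadicand p | n) = 1 := by
  have hsK : (s : K) ^ 2 = algebraMap ℚ K d := by
    simpa using congrArg (algebraMap (𝓞 K) K) hs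
  obtain ⟨a, b, hab⟩ :=
    exists_norm_eq_sq_sub_mul_sq (not_isSquare_of_dvd_quadDisc hp hsf hpd) hsK x
  refine jacobiSym_primeRadicand_eq_one hodd hsf hp hpd hn hpn (x := a * q) (y := b * q) ?_
  rw [h, hab]
  ring

variable {ι : Type*} [Fintype ι]

/-- The set of primes dividing the discriminant of some `ℚ(√dᵢ)`. -/
def ramifiedPrimes (d : ι → ℤ) : Finset ℕ :=
  Finset.univ.biUnion fun i ↦ (quadDisc (d i)).natAbs.primeFactors

theorem prime_of_mem_ramifiedPrimes {d : ι → ℤ} {p : ℕ} (hp : p ∈ ramifiedPrimes d) : p.Prime := by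
  obtain ⟨i, -, hi⟩ := Finset.mem_biUnion.1 hp
  exact Nat.prime_of_mem_primeFactors hi

/-- The family `i ↦ ∏ w p`, over the primes `p` ramified in `ℚ(√dᵢ)`, attached to a family of
signs `w`. A prime with genus characters `w` splits in all the `ℚ(√dᵢ)` if and only if this family
is trivial. -/
def signProd (d : ι → ℤ) : (ramifiedPrimes d → ℤˣ) →* (ι → ℤˣ) :=
  MonoidHom.pi fun i ↦ ∏ p : ramifiedPrimes d with p.1 ∈ (quadDisc (d i)).natAbs.primeFactors,
    Pi.evalMonoidHom _ p

theorem jacobiSym_eq_signProd {d : ι → ℤ} {i : ι} (hodd : Odd (d i)) (hsf : Squarefree (d i))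
    {w : ramifiedPrimes d → ℤˣ} {n : ℕ}
    (hw : ∀ p : ramifiedPrimes d, J(primeRadicand p | n) = w p) :
    J(d i | n) = signProd d w i := by
  have hsub : (quadDisc (d i)).natAbs.primeFactors ⊆ ramifiedPrimes d :=
    Finset.subset_biUnion_of_mem (fun i ↦ (quadDisc (d i)).natAbs.primeFactors) (Finset.mem_univ i)
  calc J(d i | n) = ∏ p ∈ (quadDisc (d i)).natAbs.primeFactors, J(primeRadicand p | n) :=
        jacobiSym_eq_prod_primeRadicand hodd hsf n
    _ = ∏ p : ramifiedPrimes d with p.1 ∈ (quadDisc (d i)).natAbs.primeFactors, (w p : ℤ) := by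
        simp only [← hw]
        rw [Finset.prod_filter, Finset.prod_coe_sort (ramifiedPrimes d) fun p ↦
          if p ∈ (quadDisc (d i)).natAbs.primeFactors then J(primeRadicand p | n) else 1,
          Finset.prod_ite_mem, Finset.inter_eq_right.2 hsub]
    _ = signProd d w i := by
        rw [signProd, MonoidHom.pi_apply, MonoidHom.finsetProd_apply, Units.coe_prod]
        rfl

variable {d : ι → ℤ} {s : ι → 𝓞 K}

theorem exists_ideal_of_mem_ker_signProd (hodd : ∀ i, Odd (d i)) (hsf : ∀ i, Squarefree (d i))
    (hs : ∀ i, s i ^ 2 = d i) (hgen : adjoin ℚ (Set.range fun i ↦ (s i : K)) = ⊤)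
    {w : ramifiedPrimes d → ℤˣ} (hw : w ∈ (signProd d).ker) :
    ∃ I : (Ideal (𝓞 K))⁰, Odd I.1.absNorm ∧ ∀ p : ramifiedPrimes d,
      (p : ℕ).Coprime I.1.absNorm ∧ J(primeRadicand p | I.1.absNorm) = w p := by
  obtain ⟨l, hlB, hl, hlodd, hlw⟩ := exists_prime_gt_forall_jacobiSym_primeRadicand_eq
    (fun p ↦ prime_of_mem_ramifiedPrimes (d := d)) w ((ramifiedPrimes d).sup id)
  have : Fact l.Prime := ⟨hl⟩
  obtain ⟨I, hI⟩ := exists_ideal_absNorm_eq hs hgen (hlodd.ne_two_of_dvd_nat dvd_rfl) fun i ↦ by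
    rw [jacobiSym.legendreSym.to_jacobiSym, jacobiSym_eq_signProd (hodd i) (hsf i) hlw, hw]
    rfl
  have hI0 : I ≠ 0 := by
    rintro rfl
    exact hl.ne_zero (hI ▸ Ideal.absNorm_bot)
  refine ⟨⟨I, mem_nonZeroDivisors_of_ne_zero hI0⟩, hI ▸ hlodd, fun p ↦ ⟨?_, hI ▸ hlw p⟩⟩
  rw [hI, Nat.coprime_primes (prime_of_mem_ramifiedPrimes p.2) hl]
  exact ((Finset.le_sup (f := id) p.2).trans_lt hlB).ne

theorem card_ker_signProd_le (hodd : ∀ i, Odd (d i)) (hsf : ∀ i, Squarefree (d i))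
    (hs : ∀ i, s i ^ 2 = d i) (hgen : adjoin ℚ (Set.range fun i ↦ (s i : K)) = ⊤) :
    Nat.card (signProd d).ker ≤
      2 * (powMonoidHom 2 : ClassGroup (𝓞 K) →* ClassGroup (𝓞 K)).range.index := by
  choose I hIodd hI using fun w : (signProd d).ker ↦
    exists_ideal_of_mem_ker_signProd hodd hsf hs hgen w.2
  obtain ⟨f, hf⟩ := exists_forall_absNorm_mul_absNorm_eq K
  have hinj : Function.Injective (f ∘ I) := by
    intro w w' hww'
    obtain ⟨x, q, hxq⟩ := hf _ _ hww'
    refine Subtype.ext (funext fun p ↦ ?_)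
    obtain ⟨i, -, hi⟩ := Finset.mem_biUnion.1 p.2
    have hone : J(primeRadicand p | (I w).1.absNorm * (I w').1.absNorm) = 1 :=
      jacobiSym_primeRadicand_eq_one_of_eq_norm (hodd i) (hsf i) (hs i)
        (Nat.prime_of_mem_primeFactors hi) (Int.natCast_dvd.2 (Nat.dvd_of_mem_primeFactors hi))
        ((hIodd w).mul (hIodd w')) ((hI w p).1.mul_right (hI w' p).1) (by exact_mod_cast hxq)
    have : NeZero (I w).1.absNorm := ⟨(hIodd w).pos.ne'⟩
    have : NeZero (I w').1.absNorm := ⟨(hIodd w').pos.ne'⟩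
    rw [jacobiSym.mul_right, (hI w p).2, (hI w' p).2] at hone
    have hmul : w.1 p * w'.1 p = 1 := Units.ext hone
    rwa [mul_eq_one_iff_eq_inv, Int.units_inv_eq_self] at hmul
  calc Nat.card (signProd d).ker
      ≤ Nat.card ((ClassGroup (𝓞 K) ⧸ (powMonoidHom 2 : ClassGroup (𝓞 K) →* _).range) × ℤˣ) :=
        Nat.card_le_card_of_injective _ hinj
    _ = 2 * (powMonoidHom 2 : ClassGroup (𝓞 K) →* ClassGroup (𝓞 K)).range.index := by
      rw [Nat.card_prod, mul_comm, Nat.card_eq_fintype_card (α := ℤˣ), Fintype.card_units_int]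
      rfl

theorem primeFactors_discr_subset_ramifiedPrimes (hd : ∀ i, d i ≠ 0) (hs : ∀ i, s i ^ 2 = d i)
    (hgen : adjoin ℚ (Set.range fun i ↦ (s i : K)) = ⊤) :
    (discr K).natAbs.primeFactors ⊆ ramifiedPrimes d := by
  intro p hp
  have hpp := Nat.prime_of_mem_primeFactors hp
  obtain ⟨i, hi⟩ := exists_dvd_quadDisc_of_dvd_discr hs hgen hpp
    (Int.natCast_dvd.2 (Nat.dvd_of_mem_primeFactors hp))
  refine Finset.mem_biUnion.2
    ⟨i, Finset.mem_univ i, Nat.mem_primeFactors.2 ⟨hpp, Int.natCast_dvd.1 hi, ?_⟩⟩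
  have := hd i
  rw [Int.natAbs_ne_zero, quadDisc]
  split_ifs <;> omega

theorem two_pow_card_primeFactors_discr_le (hodd : ∀ i, Odd (d i)) (hsf : ∀ i, Squarefree (d i))
    (hs : ∀ i, s i ^ 2 = d i) (hgen : adjoin ℚ (Set.range fun i ↦ (s i : K)) = ⊤) :
    2 ^ (discr K).natAbs.primeFactors.card ≤ 2 ^ (Fintype.card ι + 1) *
      (powMonoidHom 2 : ClassGroup (𝓞 K) →* ClassGroup (𝓞 K)).range.index := by
  calc 2 ^ (discr K).natAbs.primeFactors.card ≤ 2 ^ (ramifiedPrimes d).card :=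
        Nat.pow_le_pow_right two_pos (Finset.card_le_card
          (primeFactors_discr_subset_ramifiedPrimes (fun i ↦ (hsf i).ne_zero) hs hgen))
    _ = Nat.card (ramifiedPrimes d → ℤˣ) := by simp
    _ ≤ Nat.card (signProd d).ker * Nat.card (ι → ℤˣ) := natCard_le_card_ker_mul_card _
    _ ≤ 2 * (powMonoidHom 2 : ClassGroup (𝓞 K) →* ClassGroup (𝓞 K)).range.index *
          2 ^ Fintype.card ι := by
        have : Nat.card (ι → ℤˣ) = 2 ^ Fintype.card ι := by simp [Nat.card_fun]
        rw [this]
        exact Nat.mul_le_mul_right _ (card_ker_signProd_le hodd hsf hs hgen)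
    _ = _ := by ring

end Genera

theorem adjoin_range_eq_top_of_forall_mem_eq_or_eq_neg {F L ι : Type*} [Field F] [Field L]
    [Algebra F L] {T : Set L} {s : ι → adjoin F T}
    (hs : ∀ x ∈ T, ∃ i, x = s i ∨ x = -(s i : L)) : adjoin F (Set.range s) = ⊤ := by
  refine lift_injective _ (le_antisymm ((lift_le _).trans_eq (lift_top F _).symm) ?_)
  rw [lift_top, lift_adjoin, adjoin_le_iff]
  have hmem (i) : (s i : L) ∈ adjoin F (Subtype.val '' Set.range s) :=
    subset_adjoin F _ ⟨s i, Set.mem_range_self i, rfl⟩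
  intro x hx
  obtain ⟨i, hi | hi⟩ := hs x hx
  · exact hi ▸ hmem i
  · exact hi ▸ neg_mem (hmem i)

theorem exists_sq_eq_and_adjoin_range_eq_top (d₁ d₂ : ℤ) :
    ∃ s : Fin 2 → biquad d₁ d₂,
      (∀ i, s i ^ 2 = (![d₁, d₂] i : ℤ)) ∧ adjoin ℚ (Set.range s) = ⊤ := by
  obtain ⟨t₁, ht₁⟩ := IsAlgClosed.exists_pow_nat_eq (d₁ : ℂ) two_pos
  obtain ⟨t₂, ht₂⟩ := IsAlgClosed.exists_pow_nat_eq (d₂ : ℂ) two_pos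
  let s : Fin 2 → biquad d₁ d₂ :=
    ![⟨t₁, subset_adjoin _ _ (Or.inl ht₁)⟩, ⟨t₂, subset_adjoin _ _ (Or.inr ht₂)⟩]
  refine ⟨s, Fin.forall_fin_two.2 ⟨Subtype.ext ht₁, Subtype.ext ht₂⟩,
    adjoin_range_eq_top_of_forall_mem_eq_or_eq_neg ?_⟩
  rintro x (hx | hx)
  · exact ⟨0, sq_eq_sq_iff_eq_or_eq_neg.1 (hx.trans ht₁.symm)⟩
  · exact ⟨1, sq_eq_sq_iff_eq_or_eq_neg.1 (hx.trans ht₂.symm)⟩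

theorem stmt13_general {K : Type*} [Field K] [NumberField K] [IsCyclic (ClassGroup (𝓞 K))]
    {ι : Type*} [Fintype ι] {d : ι → ℤ} {s : ι → K} (hodd : ∀ i, Odd (d i))
    (hsf : ∀ i, Squarefree (d i)) (hs : ∀ i, s i ^ 2 = d i)
    (hgen : adjoin ℚ (Set.range s) = ⊤) :
    (discr K).natAbs.primeFactors.card ≤ Fintype.card ι + 2 := by
  have hint (i) : IsIntegral ℤ (s i) :=
    .of_pow two_pos (by rw [hs i]; exact isIntegral_algebraMap)
  have hindex : (powMonoidHom 2 : ClassGroup (𝓞 K) →* ClassGroup (𝓞 K)).range.index ≤ 2 :=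
    (IsCyclic.index_powMonoidHom_range _ 2).trans_le (Nat.gcd_le_right _ two_pos)
  refine (Nat.pow_le_pow_iff_right one_lt_two).1 ?_
  calc 2 ^ (discr K).natAbs.primeFactors.card
      ≤ 2 ^ (Fintype.card ι + 1) * (powMonoidHom 2 : ClassGroup (𝓞 K) →* _).range.index :=
        two_pow_card_primeFactors_discr_le (s := fun i ↦ (⟨s i, hint i⟩ : 𝓞 K)) hodd hsf
          (fun i ↦ RingOfIntegers.ext ((hs i).trans (map_intCast _ _).symm)) hgen
    _ ≤ 2 ^ (Fintype.card ι + 1) * 2 := Nat.mul_le_mul_left _ hindex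

theorem stmt13 (d₁ d₂ : ℤ) (hsf₁ : Squarefree d₁) (hsf₂ : Squarefree d₂)
    (hodd₁ : Odd d₁) (hodd₂ : Odd d₂) (hpos₁ : 0 < d₁) (hpos₂ : 0 < d₂)
    (hne : d₁ ≠ d₂) (h1 : d₁ ≠ 1) (h2 : d₂ ≠ 1) (hnsq : ¬ IsSquare (d₁ * d₂))
    [NumberField (biquad d₁ d₂)]
    (hdeg : Module.finrank ℚ (biquad d₁ d₂) = 4)
    (hE : ∃ C : Ideal (𝓞 (biquad d₁ d₂)),
      IsEuclideanIdeal (𝓞 (biquad d₁ d₂)) (biquad d₁ d₂) C) :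
    (NumberField.discr (biquad d₁ d₂)).natAbs.primeFactors.card ≤ 4 := by
  obtain ⟨C, hC⟩ := hE
  obtain ⟨s, hs, hgen⟩ := exists_sq_eq_and_adjoin_range_eq_top d₁ d₂
  have := hC.isCyclic_classGroup
  exact stmt13_general (Fin.forall_fin_two.2 ⟨hodd₁, hodd₂⟩) (Fin.forall_fin_two.2 ⟨hsf₁, hsf₂⟩)
    hs hgen
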